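/- arXiv:1810.10849 — 2 statements merged into one kernel-verified Lean document; each statement's English description precedes it below -/
import Mathlib

section
/- There is a constant C = C(d) > 0 such that for every u₀ ∈ L²(ℝ^d), every T > 0 and every r > 0, the heat solution u with initial datum u₀ satisfies (Σ_{n∈ℤ^d} (sup_{x∈Q_r(rn)} |u(T,x)|)² )^{1/2} ≤ C (1 + (T r^{-2})^{d/4}) T^{-d/4} ‖u₀‖. -/
/-!
Since the heat kernel `h` has integral `1`, the Cauchy–Schwarz inequality for the measure
`h (x - y) dy` gives `|u(T, x)|² ≤ ∫ h (x - y) |u₀ y|² dy`. For `x` in the cube `Q_r(rn)`, the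
Gaussian `exp (-|x - y|² / (4T))` is at most the product over the coordinates of its one-dimensional
suprema over intervals of radius `r`, which depends on `n` and `y` only. The sum of this product
over `n ∈ ℤ^d` factors into one-dimensional sums, and comparison with the Gaussian integral bounds
each of them by `4 + √(4πT) / r`, uniformly in `y`. Together with the prefactor `(4πT)^{-d/2}` of
the heat kernel, this is at most the square of the required constant.
-/

open MeasureTheory Filter Topology Metric ENNReal NNReal

noncomputable section

/-- `sinc` with value 1 at 0. -/
def sinc' (x : ℝ) : ℝ := if x = 0 then 1 else Real.sin x / x

/-- The function `f_{N,n}(x) = ∏_j sin (π (N x_j - n_j)) / (π (N x_j - n_j))`. -/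
def fN (d : ℕ) (N : ℝ) (n : Fin d → ℤ) (x : EuclideanSpace ℝ (Fin d)) : ℝ :=
  ∏ j, sinc' (Real.pi * (N * x j - n j))

/-- The lattice point `n / N` in `ℝ^d`. -/
def latticePt (d : ℕ) (N : ℝ) (n : Fin d → ℤ) : EuclideanSpace ℝ (Fin d) :=
  WithLp.toLp 2 fun j => (n j : ℝ) / N

/-- The heat solution at time `t > 0` with initial datum `u₀ ∈ L²(ℝ^d)`:
`u(t,x) = (4πt)^{-d/2} ∫ e^{-|x-y|²/(4t)} u₀(y) dy`. -/
def heatSol (d : ℕ) (u₀ : EuclideanSpace ℝ (Fin d) → ℝ) (t : ℝ)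
    (x : EuclideanSpace ℝ (Fin d)) : ℝ :=
  (4 * Real.pi * t) ^ (-(d : ℝ) / 2) * ∫ y, Real.exp (-‖x - y‖ ^ 2 / (4 * t)) * u₀ y

/-- The family `F` is summable in `L²(ℝ^d)` with sum `g`: the finite partial sums
converge to `g` in the `L²` norm along the filter of finite subsets of `ℤ^d`. -/
def HasSumL2 (d : ℕ) {V : Type} [NormedAddCommGroup V]
    (F : (Fin d → ℤ) → EuclideanSpace ℝ (Fin d) → V)
    (g : EuclideanSpace ℝ (Fin d) → V) : Prop :=
  Tendsto (fun s : Finset (Fin d → ℤ) =>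
    eLpNorm (fun x => g x - ∑ n ∈ s, F n x) 2 volume) atTop (𝓝 0)

/-- The closed cube `Q_r(0)` in `ℝ^d`, centered at the origin, of side length `2r`. -/
def Qcube (d : ℕ) (r : ℝ) : Set (EuclideanSpace ℝ (Fin d)) := {ξ | ∀ j, |ξ j| ≤ r}

/-- The truncated Fourier integral, with the paper's normalization
`(2π)^{-d/2} ∫_{|x| ≤ R} e^{-i x·ξ} f(x) dx`. -/
def truncFT (d : ℕ) (f : EuclideanSpace ℝ (Fin d) → ℂ) (R : ℝ)
    (ξ : EuclideanSpace ℝ (Fin d)) : ℂ :=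
  (((2 * Real.pi) ^ (-(d : ℝ) / 2) : ℝ) : ℂ) *
    ∫ x in closedBall (0 : EuclideanSpace ℝ (Fin d)) R,
      Complex.exp (-(Complex.I * ((inner ℝ x ξ : ℝ) : ℂ))) * f x

/-- `fhat` is the Fourier transform of `f ∈ L²(ℝ^d)` in the `L²` (Plancherel) sense:
`fhat ∈ L²` and the Fourier integrals of the truncations of `f` converge to `fhat`
in the `L²` norm. -/
def IsL2Fourier (d : ℕ) (f fhat : EuclideanSpace ℝ (Fin d) → ℂ) : Prop :=
  MemLp fhat 2 volume ∧
    Tendsto (fun R : ℝ => eLpNorm (fun ξ => fhat ξ - truncFT d f R ξ) 2 volume)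
      atTop (𝓝 0)

/-- The `L²(ℝ^d)` norm of a function, as a real number. -/
def l2norm (d : ℕ) {V : Type} [NormedAddCommGroup V]
    (f : EuclideanSpace ℝ (Fin d) → V) : ℝ :=
  (eLpNorm f 2 volume).toReal

/-! ### Sums over lattices -/

lemma tsum_int_abs_sub_le_two_mul_tsum_nat {ψ : ℝ → ℝ≥0∞} (hψ : AntitoneOn ψ (Set.Ici 0))
    (q : ℝ) : ∑' k : ℤ, ψ |k - q| ≤ 2 * ∑' n : ℕ, ψ n := by
  have comp_le {n : ℕ} {t : ℝ} (h : n ≤ t) : ψ t ≤ ψ n :=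
    hψ (Set.mem_Ici.2 n.cast_nonneg) (Set.mem_Ici.2 (n.cast_nonneg.trans h)) h
  rw [← (Equiv.addRight (⌊q⌋ + 1)).tsum_eq,
    tsum_of_nat_of_neg_add_one ENNReal.summable ENNReal.summable, two_mul]
  refine add_le_add (ENNReal.tsum_le_tsum fun n => comp_le ?_)
    (ENNReal.tsum_le_tsum fun n => comp_le ?_)
  · refine le_trans ?_ (le_abs_self _)
    push_cast [Equiv.coe_addRight]
    linarith [Int.lt_floor_add_one q]
  · refine le_trans ?_ (neg_le_abs _)
    push_cast [Equiv.coe_addRight]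
    linarith [Int.floor_le q]

lemma tsum_pi_prod_le_prod_tsum {ι κ : Type*} [Fintype ι] (f : ι → κ → ℝ≥0∞) :
    ∑' n : ι → κ, ∏ j, f j (n j) ≤ ∏ j, ∑' k, f j k := by
  classical
  rw [ENNReal.tsum_eq_iSup_sum]
  refine iSup_le fun s => ?_
  have subset_box : s ⊆ Fintype.piFinset fun j => s.image fun n => n j := fun n hn =>
    Fintype.mem_piFinset.2 fun j => Finset.mem_image_of_mem (fun n => n j) hn
  calc ∑ n ∈ s, ∏ j, f j (n j)
      ≤ ∑ n ∈ Fintype.piFinset fun j => s.image fun n => n j, ∏ j, f j (n j) :=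
        Finset.sum_le_sum_of_subset subset_box
    _ = ∏ j, ∑ k ∈ s.image fun n => n j, f j k := (Finset.prod_univ_sum _ _).symm
    _ ≤ ∏ j, ∑' k, f j k := Finset.prod_le_prod' fun j _ => ENNReal.sum_le_tsum _

/-! ### A maximal Schur test -/

lemma ofReal_biSup_le_biSup_ofReal {α : Type*} (S : Set α) (f : α → ℝ) :
    ENNReal.ofReal (⨆ x ∈ S, f x) ≤ ⨆ x ∈ S, ENNReal.ofReal (f x) := by
  by_cases htop : ⨆ x ∈ S, ENNReal.ofReal (f x) = ∞
  · exact htop ▸ le_top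
  · refine ENNReal.ofReal_le_of_le_toReal (Real.iSup_le (fun x => Real.iSup_le (fun hx => ?_)
      ENNReal.toReal_nonneg) ENNReal.toReal_nonneg)
    exact (ENNReal.ofReal_le_iff_le_toReal htop).1
      (le_iSup₂ (f := fun x (_ : x ∈ S) => ENNReal.ofReal (f x)) x hx)

section Schur

variable {X Y ι : Type*} [MeasurableSpace Y] {μ : Measure Y}

lemma sq_lintegral_mul_le_lintegral_mul_lintegral_mul_sq {k f : Y → ℝ≥0∞}
    (hk : AEMeasurable k μ) (hf : AEMeasurable f μ) :
    (∫⁻ y, k y * f y ∂μ) ^ 2 ≤ (∫⁻ y, k y ∂μ) * ∫⁻ y, k y * f y ^ 2 ∂μ := by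
  have factor (a b : ℝ≥0∞) : a ^ (2⁻¹ : ℝ) * (a * b ^ 2) ^ (2⁻¹ : ℝ) = a * b := by
    rw [← ENNReal.mul_rpow_of_nonneg _ _ (by norm_num), ← mul_assoc, ← sq, ← mul_pow,
      ← ENNReal.rpow_two, ENNReal.rpow_rpow_inv two_ne_zero]
  have hoelder := ENNReal.lintegral_mul_norm_pow_le hk (hk.mul (hf.pow_const 2))
    (p := 2⁻¹) (q := 2⁻¹) (by norm_num) (by norm_num) (by norm_num)
  simp only [Pi.mul_apply, factor] at hoelder
  rwa [← ENNReal.mul_rpow_of_nonneg _ _ (by norm_num), ENNReal.le_rpow_inv_iff two_pos,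
    ENNReal.rpow_two] at hoelder

lemma tsum_sq_biSup_lintegral_mul_le [Countable ι] {k : X → Y → ℝ≥0∞} {S : ι → Set X}
    {W : ι → Y → ℝ≥0∞} {f : Y → ℝ≥0∞} {A B : ℝ≥0∞} (hk : ∀ x, AEMeasurable (k x) μ)
    (hW : ∀ n, AEMeasurable (W n) μ) (hf : AEMeasurable f μ)
    (lintegral_le : ∀ x, ∫⁻ y, k x y ∂μ ≤ A) (le_W : ∀ n, ∀ x ∈ S n, ∀ y, k x y ≤ W n y)
    (tsum_le : ∀ y, ∑' n, W n y ≤ B) :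
    ∑' n, (⨆ x ∈ S n, ∫⁻ y, k x y * f y ∂μ) ^ 2 ≤ A * B * ∫⁻ y, f y ^ 2 ∂μ := by
  have sq_biSup_le (n : ι) :
      (⨆ x ∈ S n, ∫⁻ y, k x y * f y ∂μ) ^ 2 ≤ A * ∫⁻ y, W n y * f y ^ 2 ∂μ := by
    simp only [ENNReal.iSup_pow_of_ne_zero two_ne_zero, iSup_le_iff]
    intro x hx
    calc (∫⁻ y, k x y * f y ∂μ) ^ 2 ≤ (∫⁻ y, k x y ∂μ) * ∫⁻ y, k x y * f y ^ 2 ∂μ :=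
          sq_lintegral_mul_le_lintegral_mul_lintegral_mul_sq (hk x) hf
      _ ≤ A * ∫⁻ y, W n y * f y ^ 2 ∂μ := by
          gcongr
          exacts [lintegral_le x, le_W n x hx _]
  calc ∑' n, (⨆ x ∈ S n, ∫⁻ y, k x y * f y ∂μ) ^ 2
      ≤ ∑' n, A * ∫⁻ y, W n y * f y ^ 2 ∂μ := ENNReal.tsum_le_tsum sq_biSup_le
    _ = A * ∫⁻ y, (∑' n, W n y) * f y ^ 2 ∂μ := by
        simp only [← ENNReal.tsum_mul_right]
        rw [ENNReal.tsum_mul_left]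
        exact congrArg (A * ·) (lintegral_tsum fun n => (hW n).mul (hf.pow_const 2)).symm
    _ ≤ A * ∫⁻ y, B * f y ^ 2 ∂μ := by
        gcongr
        exact tsum_le _
    _ = A * B * ∫⁻ y, f y ^ 2 ∂μ := by
        rw [lintegral_const_mul'' B (hf.pow_const 2), mul_assoc]

end Schur

/-! ### The Gaussian envelope -/

/-- The supremum of the Gaussian `s ↦ exp (-b s²)` over the interval `[t - r, t + r]`, for
`b, r ≥ 0`: the point of this interval closest to `0` has absolute value `max (|t| - r) 0`. -/
def gaussianEnvelope (b r t : ℝ) : ℝ := Real.exp (-b * max (|t| - r) 0 ^ 2)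

lemma gaussianEnvelope_nonneg (b r t : ℝ) : 0 ≤ gaussianEnvelope b r t := (Real.exp_pos _).le

lemma measurable_gaussianEnvelope (b r : ℝ) : Measurable (gaussianEnvelope b r) := by
  unfold gaussianEnvelope
  fun_prop

lemma gaussianEnvelope_mul_left {r : ℝ} (hr : 0 ≤ r) (b t : ℝ) :
    gaussianEnvelope b r (r * t) = gaussianEnvelope (b * r ^ 2) 1 t := by
  have dilate : max (|r * t| - r) 0 = r * max (|t| - 1) 0 := by
    rw [mul_max_of_nonneg _ _ hr, abs_mul, abs_of_nonneg hr, mul_sub, mul_one, mul_zero]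
  rw [gaussianEnvelope, gaussianEnvelope, dilate]
  ring_nf

lemma antitoneOn_gaussianEnvelope {b : ℝ} (hb : 0 ≤ b) (r : ℝ) :
    AntitoneOn (gaussianEnvelope b r) (Set.Ici 0) := by
  intro s hs t ht hst
  rw [Set.mem_Ici] at hs ht
  rw [gaussianEnvelope, gaussianEnvelope, abs_of_nonneg hs, abs_of_nonneg ht, neg_mul, neg_mul]
  gcongr

lemma exp_neg_mul_sq_le_gaussianEnvelope {b r s t : ℝ} (hb : 0 ≤ b) (h : |s - t| ≤ r) :
    Real.exp (-b * s ^ 2) ≤ gaussianEnvelope b r t := by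
  have max_le_abs : max (|t| - r) 0 ≤ |s| :=
    max_le (by linarith [abs_sub_abs_le_abs_sub t s, abs_sub_comm s t]) (abs_nonneg s)
  rw [gaussianEnvelope, neg_mul, neg_mul, ← sq_abs s]
  gcongr

lemma exp_neg_mul_norm_sq_le_prod_gaussianEnvelope {ι : Type*} [Fintype ι] {b r : ℝ}
    (hb : 0 ≤ b) {v : EuclideanSpace ℝ ι} {c : ι → ℝ} (h : ∀ j, |v j - c j| ≤ r) :
    Real.exp (-b * ‖v‖ ^ 2) ≤ ∏ j, gaussianEnvelope b r (c j) := by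
  rw [EuclideanSpace.norm_sq_eq, Finset.mul_sum, Real.exp_sum]
  simp only [Real.norm_eq_abs, sq_abs]
  exact Finset.prod_le_prod (fun _ _ => (Real.exp_pos _).le) fun j _ =>
    exp_neg_mul_sq_le_gaussianEnvelope hb (h j)

lemma tsum_nat_exp_neg_mul_sq_le {b : ℝ} (hb : 0 < b) :
    ∑' n : ℕ, ENNReal.ofReal (Real.exp (-b * (n : ℝ) ^ 2))
      ≤ ENNReal.ofReal (1 + √(Real.pi / b) / 2) := by
  have anti : AntitoneOn (fun t : ℝ => Real.exp (-b * t ^ 2)) (Set.Ici 0) := by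
    intro s hs t _ hst
    simp only [neg_mul]
    have : 0 ≤ s := hs
    gcongr
  have integrable := (integrable_exp_neg_mul_sq hb).integrableOn (s := Set.Ioi 0)
  have nonneg (t : ℝ) : 0 ≤ Real.exp (-b * t ^ 2) := (Real.exp_pos _).le
  rw [← ENNReal.ofReal_tsum_of_nonneg (fun n : ℕ => nonneg n)
    (anti.summable_of_integrableOn_Ioi_zero integrable fun t _ => nonneg t)]
  apply ENNReal.ofReal_le_ofReal
  rw [← integral_gaussian_Ioi]
  simpa using anti.tsum_le_integral integrable fun t _ => nonneg t

lemma tsum_int_gaussianEnvelope_le {b r : ℝ} (hb : 0 < b) (hr : 0 < r) (y : ℝ) :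
    ∑' k : ℤ, ENNReal.ofReal (gaussianEnvelope b r (r * k - y))
      ≤ ENNReal.ofReal (4 + √(Real.pi / (b * r ^ 2))) := by
  have hbr : 0 < b * r ^ 2 := by positivity
  have rescale (k : ℤ) : gaussianEnvelope b r (r * k - y)
      = gaussianEnvelope (b * r ^ 2) 1 |k - y / r| := by
    rw [show r * k - y = r * (k - y / r) by field_simp, gaussianEnvelope_mul_left hr.le,
      gaussianEnvelope, gaussianEnvelope, abs_abs]
  have at_zero : gaussianEnvelope (b * r ^ 2) 1 (0 : ℕ) = 1 := by simp [gaussianEnvelope]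
  have at_succ (n : ℕ) : gaussianEnvelope (b * r ^ 2) 1 (n + 1 : ℕ)
      = Real.exp (-(b * r ^ 2) * (n : ℝ) ^ 2) := by
    rw [gaussianEnvelope, Nat.abs_cast, Nat.cast_succ, add_sub_cancel_right,
      max_eq_left n.cast_nonneg]
  calc ∑' k : ℤ, ENNReal.ofReal (gaussianEnvelope b r (r * k - y))
      ≤ 2 * ∑' n : ℕ, ENNReal.ofReal (gaussianEnvelope (b * r ^ 2) 1 n) := by
        simp only [rescale]
        exact tsum_int_abs_sub_le_two_mul_tsum_nat
          (ENNReal.ofReal_mono.comp_antitoneOn (antitoneOn_gaussianEnvelope hbr.le 1)) _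
    _ = 2 * (1 + ∑' n : ℕ, ENNReal.ofReal (Real.exp (-(b * r ^ 2) * (n : ℝ) ^ 2))) := by
        rw [tsum_eq_zero_add' ENNReal.summable, at_zero, ENNReal.ofReal_one]
        simp only [at_succ]
    _ ≤ 2 * (1 + ENNReal.ofReal (1 + √(Real.pi / (b * r ^ 2)) / 2)) := by
        gcongr
        exact tsum_nat_exp_neg_mul_sq_le hbr
    _ = ENNReal.ofReal (4 + √(Real.pi / (b * r ^ 2))) := by
        rw [← ENNReal.ofReal_one, ← ENNReal.ofReal_add zero_le_one (by positivity),
          ← ENNReal.ofReal_ofNat 2, ← ENNReal.ofReal_mul zero_le_two]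
        ring_nf

lemma tsum_prod_gaussianEnvelope_le {ι : Type*} [Fintype ι] {b r : ℝ} (hb : 0 < b) (hr : 0 < r)
    (y : ι → ℝ) :
    ∑' n : ι → ℤ, ENNReal.ofReal (∏ j, gaussianEnvelope b r (r * n j - y j))
      ≤ ENNReal.ofReal ((4 + √(Real.pi / (b * r ^ 2))) ^ Fintype.card ι) := by
  simp only [ENNReal.ofReal_prod_of_nonneg fun _ _ => gaussianEnvelope_nonneg _ _ _]
  calc ∑' n : ι → ℤ, ∏ j, ENNReal.ofReal (gaussianEnvelope b r (r * n j - y j))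
      ≤ ∏ j, ∑' k : ℤ, ENNReal.ofReal (gaussianEnvelope b r (r * k - y j)) :=
        tsum_pi_prod_le_prod_tsum fun j (k : ℤ) =>
          ENNReal.ofReal (gaussianEnvelope b r (r * k - y j))
    _ ≤ ∏ _j : ι, ENNReal.ofReal (4 + √(Real.pi / (b * r ^ 2))) :=
        Finset.prod_le_prod' fun j _ => tsum_int_gaussianEnvelope_le hb hr (y j)
    _ = ENNReal.ofReal ((4 + √(Real.pi / (b * r ^ 2))) ^ Fintype.card ι) := by
        rw [Finset.prod_const, Finset.card_univ, ENNReal.ofReal_pow (by positivity)]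

/-! ### The heat kernel -/

section HeatKernel

variable {V : Type*} [NormedAddCommGroup V] [InnerProductSpace ℝ V]

/-- The heat kernel `(4πt)^{-dim V / 2} exp (-‖v‖² / (4t))`, whose convolution with an initial
datum gives the heat solution at time `t`. -/
def heatKernel (t : ℝ) (v : V) : ℝ :=
  (4 * Real.pi * t) ^ (-(Module.finrank ℝ V : ℝ) / 2) * Real.exp (-‖v‖ ^ 2 / (4 * t))

lemma heatKernel_nonneg {t : ℝ} (ht : 0 ≤ t) (v : V) : 0 ≤ heatKernel t v := by
  unfold heatKernel
  positivity

variable [MeasurableSpace V]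

lemma measurable_heatKernel [OpensMeasurableSpace V] (t : ℝ) :
    Measurable (heatKernel t : V → ℝ) := by
  unfold heatKernel
  fun_prop

variable [BorelSpace V] [FiniteDimensional ℝ V]

lemma integral_heatKernel {t : ℝ} (ht : 0 < t) :
    ∫ v : V, heatKernel t v = 1 := by
  have hpit : 0 < 4 * Real.pi * t := by positivity
  have gaussian (v : V) : Real.exp (-‖v‖ ^ 2 / (4 * t)) = Real.exp (-(4 * t)⁻¹ * ‖v‖ ^ 2) := by
    ring_nf
  simp only [heatKernel, integral_const_mul, gaussian]
  rw [GaussianFourier.integral_rexp_neg_mul_sq_norm (by positivity), div_inv_eq_mul,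
    show Real.pi * (4 * t) = 4 * Real.pi * t by ring, ← Real.rpow_add hpit, neg_div,
    neg_add_cancel, Real.rpow_zero]

lemma lintegral_enorm_heatKernel_sub {t : ℝ} (ht : 0 < t) (x : V) :
    ∫⁻ y : V, ‖heatKernel t (x - y)‖ₑ = 1 := by
  have integrable : Integrable (heatKernel t : V → ℝ) :=
    .of_integral_ne_zero (by simp [integral_heatKernel ht])
  rw [lintegral_sub_left_eq_self (fun v : V => ‖heatKernel t v‖ₑ) x]
  simp only [Real.enorm_of_nonneg (heatKernel_nonneg ht.le _)]
  rw [← ofReal_integral_eq_lintegral_ofReal integrable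
    (.of_forall (heatKernel_nonneg ht.le)), integral_heatKernel ht, ENNReal.ofReal_one]

end HeatKernel

lemma enorm_heatKernel_sub_le {ι : Type*} [Fintype ι] {t r : ℝ} (ht : 0 < t)
    {x y : EuclideanSpace ℝ ι} {c : ι → ℝ} (h : ∀ j, |x j - c j| ≤ r) :
    ‖heatKernel t (x - y)‖ₑ
      ≤ ENNReal.ofReal ((4 * Real.pi * t) ^ (-(Fintype.card ι : ℝ) / 2))
        * ENNReal.ofReal (∏ j, gaussianEnvelope (4 * t)⁻¹ r (c j - y j)) := by
  rw [Real.enorm_of_nonneg (heatKernel_nonneg ht.le _), ← ENNReal.ofReal_mul (by positivity),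
    heatKernel, finrank_euclideanSpace,
    show -‖x - y‖ ^ 2 / (4 * t) = -(4 * t)⁻¹ * ‖x - y‖ ^ 2 by ring]
  gcongr
  exact exp_neg_mul_norm_sq_le_prod_gaussianEnvelope (by positivity)
    fun j => by simpa only [PiLp.sub_apply, sub_sub_sub_cancel_right] using h j

lemma enorm_heatSol_le_lintegral {d : ℕ} (u₀ : EuclideanSpace ℝ (Fin d) → ℝ) (t : ℝ)
    (x : EuclideanSpace ℝ (Fin d)) :
    ‖heatSol d u₀ t x‖ₑ ≤ ∫⁻ y, ‖heatKernel t (x - y)‖ₑ * ‖u₀ y‖ₑ := by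
  have heatSol_eq : heatSol d u₀ t x = ∫ y, heatKernel t (x - y) * u₀ y := by
    simp only [heatSol, heatKernel, finrank_euclideanSpace_fin, mul_assoc, integral_const_mul]
  simpa only [heatSol_eq, enorm_mul] using
    enorm_integral_le_lintegral_enorm fun y => heatKernel t (x - y) * u₀ y

lemma ofReal_biSup_heatSol_le {d : ℕ} (u₀ : EuclideanSpace ℝ (Fin d) → ℝ) (t : ℝ)
    (S : Set (EuclideanSpace ℝ (Fin d))) :
    ENNReal.ofReal (⨆ x ∈ S, |heatSol d u₀ t x|)
      ≤ ⨆ x ∈ S, ∫⁻ y, ‖heatKernel t (x - y)‖ₑ * ‖u₀ y‖ₑ := by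
  refine (ofReal_biSup_le_biSup_ofReal _ _).trans (iSup₂_mono fun x _ => ?_)
  rw [← Real.enorm_eq_ofReal_abs]
  exact enorm_heatSol_le_lintegral u₀ t x

lemma lintegral_enorm_sq_eq_ofReal_l2norm_sq {d : ℕ} {V : Type} [NormedAddCommGroup V]
    {f : EuclideanSpace ℝ (Fin d) → V} (hf : eLpNorm f 2 volume ≠ ∞) :
    ∫⁻ y, ‖f y‖ₑ ^ 2 = ENNReal.ofReal (l2norm d f) ^ 2 := by
  rw [l2norm, ENNReal.ofReal_toReal hf]
  simpa using (eLpNorm_nnreal_pow_eq_lintegral (f := f) (μ := volume) (p := 2) two_ne_zero).symm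

lemma tsum_sq_ofReal_biSup_heatSol_le {d : ℕ} {u₀ : EuclideanSpace ℝ (Fin d) → ℝ}
    (hu₀ : MemLp u₀ 2 volume) {T r : ℝ} (hT : 0 < T) (hr : 0 < r) :
    ∑' n : Fin d → ℤ,
        ENNReal.ofReal (⨆ x ∈ {x : EuclideanSpace ℝ (Fin d) | ∀ j, |x j - r * n j| ≤ r},
          |heatSol d u₀ T x|) ^ 2
      ≤ ENNReal.ofReal ((4 * Real.pi * T) ^ (-(d : ℝ) / 2)
          * (4 + √(Real.pi / ((4 * T)⁻¹ * r ^ 2))) ^ d) * ENNReal.ofReal (l2norm d u₀) ^ 2 := by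
  set Q : (Fin d → ℤ) → Set (EuclideanSpace ℝ (Fin d)) := fun n => {x | ∀ j, |x j - r * n j| ≤ r}
  set K := ENNReal.ofReal ((4 * Real.pi * T) ^ (-(d : ℝ) / 2))
  set W : (Fin d → ℤ) → EuclideanSpace ℝ (Fin d) → ℝ≥0∞ := fun n y =>
    K * ENNReal.ofReal (∏ j, gaussianEnvelope (4 * T)⁻¹ r (r * n j - y j))
  have measurable_kernel (x : EuclideanSpace ℝ (Fin d)) :
      Measurable fun y => ‖heatKernel T (x - y)‖ₑ :=
    ((measurable_heatKernel T).comp (measurable_const.sub measurable_id)).enorm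
  have measurable_W (n : Fin d → ℤ) : Measurable (W n) := by
    have := measurable_gaussianEnvelope (4 * T)⁻¹ r
    fun_prop
  have kernel_le_W (n : Fin d → ℤ) : ∀ x ∈ Q n, ∀ y, ‖heatKernel T (x - y)‖ₑ ≤ W n y := by
    intro x hx y
    simpa only [Fintype.card_fin] using enorm_heatKernel_sub_le hT hx
  have tsum_W_le (y : EuclideanSpace ℝ (Fin d)) :
      ∑' n, W n y ≤ K * ENNReal.ofReal ((4 + √(Real.pi / ((4 * T)⁻¹ * r ^ 2))) ^ d) := by
    rw [ENNReal.tsum_mul_left]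
    gcongr
    simpa only [Fintype.card_fin] using
      tsum_prod_gaussianEnvelope_le (inv_pos.2 (by positivity : 0 < 4 * T)) hr y
  calc ∑' n, ENNReal.ofReal (⨆ x ∈ Q n, |heatSol d u₀ T x|) ^ 2
      ≤ ∑' n, (⨆ x ∈ Q n, ∫⁻ y, ‖heatKernel T (x - y)‖ₑ * ‖u₀ y‖ₑ) ^ 2 :=
        ENNReal.tsum_le_tsum fun n => pow_le_pow_left' (ofReal_biSup_heatSol_le u₀ T (Q n)) 2
    _ ≤ 1 * (K * ENNReal.ofReal ((4 + √(Real.pi / ((4 * T)⁻¹ * r ^ 2))) ^ d))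
          * ∫⁻ y, ‖u₀ y‖ₑ ^ 2 :=
        tsum_sq_biSup_lintegral_mul_le
          (fun x => (measurable_kernel x).aemeasurable)
          (fun n => (measurable_W n).aemeasurable) hu₀.1.enorm
          (fun x => (lintegral_enorm_heatKernel_sub hT x).le) kernel_le_W tsum_W_le
    _ = _ := by
        rw [one_mul, ← ENNReal.ofReal_mul (by positivity),
          lintegral_enorm_sq_eq_ofReal_l2norm_sq hu₀.eLpNorm_ne_top]

lemma one_add_pow_le_two_pow_mul_sq {s : ℝ} (hs : 0 ≤ s) (d : ℕ) :
    (1 + s) ^ d ≤ 2 ^ d * (1 + s ^ ((d : ℝ) / 2)) ^ 2 := by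
  have rpow_half_sq : (s ^ ((d : ℝ) / 2)) ^ 2 = s ^ d := by
    rw [← Real.rpow_mul_natCast hs, Nat.cast_ofNat, div_mul_cancel₀ _ two_ne_zero,
      Real.rpow_natCast]
  have rpow_half_nonneg : 0 ≤ s ^ ((d : ℝ) / 2) := by positivity
  calc (1 + s) ^ d ≤ (2 * max 1 s) ^ d := by
        gcongr
        linarith [le_max_left 1 s, le_max_right 1 s]
    _ = 2 ^ d * max 1 s ^ d := mul_pow _ _ _
    _ ≤ 2 ^ d * (1 + s ^ ((d : ℝ) / 2)) ^ 2 := by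
        gcongr
        rcases le_total s 1 with h | h
        · rw [max_eq_left h, one_pow]
          nlinarith
        · rw [max_eq_right h, ← rpow_half_sq]
          gcongr
          linarith

lemma four_add_four_mul_sqrt_pow_le {a : ℝ} (ha : 0 ≤ a) (d : ℕ) :
    (4 + 4 * √a) ^ d ≤ (3 ^ d * (1 + a ^ ((d : ℝ) / 4))) ^ 2 := by
  have sqrt_rpow : √a ^ ((d : ℝ) / 2) = a ^ ((d : ℝ) / 4) := by
    rw [Real.sqrt_eq_rpow, ← Real.rpow_mul ha]
    ring_nf
  calc (4 + 4 * √a) ^ d = 4 ^ d * (1 + √a) ^ d := by rw [← mul_pow, mul_add, mul_one]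
    _ ≤ 4 ^ d * (2 ^ d * (1 + a ^ ((d : ℝ) / 4)) ^ 2) := by
        gcongr
        simpa only [sqrt_rpow] using one_add_pow_le_two_pow_mul_sq (Real.sqrt_nonneg a) d
    _ ≤ 9 ^ d * (1 + a ^ ((d : ℝ) / 4)) ^ 2 := by
        rw [← mul_assoc, ← mul_pow]
        gcongr
        norm_num
    _ = (3 ^ d * (1 + a ^ ((d : ℝ) / 4))) ^ 2 := by
        rw [mul_pow, ← pow_mul, mul_comm d 2, pow_mul]
        norm_num

lemma rpow_mul_four_add_sqrt_pow_le (d : ℕ) {T r : ℝ} (hT : 0 < T) (hr : 0 ≤ r) :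
    (4 * Real.pi * T) ^ (-(d : ℝ) / 2) * (4 + √(Real.pi / ((4 * T)⁻¹ * r ^ 2))) ^ d
      ≤ (3 ^ d * (1 + (T * r ^ (-(2 : ℝ))) ^ ((d : ℝ) / 4)) * T ^ (-(d : ℝ) / 4)) ^ 2 := by
  set a := T * r ^ (-(2 : ℝ)) with ha
  have a_nonneg : 0 ≤ a := by positivity
  have rpow_le : (4 * Real.pi * T) ^ (-(d : ℝ) / 2) ≤ (T ^ (-(d : ℝ) / 4)) ^ 2 := by
    rw [← Real.rpow_mul_natCast hT.le, Nat.cast_ofNat,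
      show -(d : ℝ) / 4 * 2 = -(d : ℝ) / 2 by ring]
    refine Real.rpow_le_rpow_of_nonpos hT ?_ (by rw [neg_div, neg_nonpos]; positivity)
    nlinarith [Real.pi_gt_three]
  have sqrt_le : √(Real.pi / ((4 * T)⁻¹ * r ^ 2)) ≤ 4 * √a := by
    have div_eq : Real.pi / ((4 * T)⁻¹ * r ^ 2) = 4 * Real.pi * a := by
      rw [ha, Real.rpow_neg hr, Real.rpow_two, div_eq_mul_inv, mul_inv, inv_inv]
      ring
    rw [div_eq, Real.sqrt_le_left (by positivity), mul_pow, Real.sq_sqrt a_nonneg]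
    nlinarith [Real.pi_le_four]
  calc (4 * Real.pi * T) ^ (-(d : ℝ) / 2) * (4 + √(Real.pi / ((4 * T)⁻¹ * r ^ 2))) ^ d
      ≤ (T ^ (-(d : ℝ) / 4)) ^ 2 * (4 + 4 * √a) ^ d := by gcongr
    _ ≤ (T ^ (-(d : ℝ) / 4)) ^ 2 * (3 ^ d * (1 + a ^ ((d : ℝ) / 4))) ^ 2 := by
        gcongr
        exact four_add_four_mul_sqrt_pow_le a_nonneg d
    _ = (3 ^ d * (1 + a ^ ((d : ℝ) / 4)) * T ^ (-(d : ℝ) / 4)) ^ 2 := by ring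

/-- There is `C = C(d) > 0` such that for every `u₀ ∈ L²(ℝ^d)`, `T > 0` and `r > 0`,
`(Σ_{n ∈ ℤ^d} (sup_{x ∈ Q_r(rn)} |u(T,x)|)²)^{1/2} ≤ C (1 + (T r^{-2})^{d/4}) T^{-d/4} ‖u₀‖`. -/
theorem statement8 (d : ℕ) (hd : 0 < d) :
    ∃ C : ℝ, 0 < C ∧
      ∀ u₀ : EuclideanSpace ℝ (Fin d) → ℝ, MemLp u₀ 2 volume →
      ∀ T r : ℝ, 0 < T → 0 < r →
        (∑' n : Fin d → ℤ,
            (ENNReal.ofReal (⨆ x ∈ {x : EuclideanSpace ℝ (Fin d) | ∀ j, |x j - r * n j| ≤ r},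
              |heatSol d u₀ T x|)) ^ 2) ^ ((1 : ℝ) / 2)
          ≤ ENNReal.ofReal
              (C * (1 + (T * r ^ (-(2 : ℝ))) ^ ((d : ℝ) / 4)) * T ^ (-(d : ℝ) / 4)
                * l2norm d u₀) := by
  refine ⟨3 ^ d, by positivity, fun u₀ hu₀ T r hT hr => ?_⟩
  rw [one_div, ENNReal.rpow_inv_le_iff two_pos, ENNReal.rpow_two]
  refine (tsum_sq_ofReal_biSup_heatSol_le hu₀ hT hr).trans ?_
  rw [ENNReal.ofReal_mul (q := l2norm d u₀) (by positivity), mul_pow]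
  gcongr
  rw [← ENNReal.ofReal_pow (by positivity)]
  exact ENNReal.ofReal_le_ofReal (rpow_mul_four_add_sqrt_pow_le d hT hr.le)
end
end

section
/- Let B > 0 and L > 0. Let (λ_n)_{n∈ℤ^d} ⊂ ℝ^d satisfy Σ_{n∈ℤ^d} |h(λ_n)|² ≤ B for every h ∈ 𝒫₁ with ‖h‖ ≤ 1 (pointwise values via the continuous representative). Assume (μ_n)_{n∈ℤ^d} ⊂ ℝ^d satisfies |λ_n − μ_n| ≤ L for all n ∈ ℤ^d. Then for every f ∈ 𝒫₁, Σ_{n∈ℤ^d} |f(λ_n) − f(μ_n)|² ≤ B (e^{πdL} − 1)² ‖f‖². -/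
open MeasureTheory Filter Topology Metric ENNReal NNReal

noncomputable section

/-!
A band-limited `f` is `𝓕⁻ G` with `G` square integrable and supported in a cube. Expanding the
character `e^{2πi⟨η,t⟩}` under the integral gives the Taylor series of `f`, whose coefficients are
the partial derivatives of `f`. A derivative of order `k` multiplies `G` by a symbol bounded by
`r ^ k` on the cube, so it is again band-limited, with norm at most `r ^ k ‖f‖` (Bernstein), and the
sampling bound applies to it. Minkowski's inequality in `ℓ²` sums these bounds over the `d ^ k`
derivatives of each order `k ≥ 1`, which produces `∑_{k ≥ 1} (r d L) ^ k / k! = e^{r d L} - 1`.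
-/

open FourierTransform SchwartzMap

section LpTools

variable {V F : Type*} [NormedAddCommGroup F]

theorem tendsto_eLpNorm_indicator_compl_of_aecover {ι : Type*} [MeasurableSpace V] {μ : Measure V}
    {l : Filter ι} [l.IsCountablyGenerated] {φ : ι → Set V} (hφ : AECover μ l φ) {f : V → F}
    {p : ℝ≥0∞} (hp : p ≠ ∞) (hf : MemLp f p μ) :
    Tendsto (fun i ↦ eLpNorm ((φ i)ᶜ.indicator f) p μ) l (𝓝 0) := by
  rcases eq_or_ne p 0 with rfl | hp0
  · simpa only [eLpNorm_exponent_zero] using tendsto_const_nhds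
  have hfin : ∫⁻ x, ‖f x‖ₑ ^ p.toReal ∂μ ≠ ∞ :=
    ((eLpNorm_lt_top_iff_lintegral_rpow_enorm_lt_top hp0 hp).1 hf.2).ne
  have htail : Tendsto (fun i ↦ ∫⁻ x, (φ i)ᶜ.indicator (fun x ↦ ‖f x‖ₑ ^ p.toReal) x ∂μ) l
      (𝓝 (∫⁻ _, 0 ∂μ)) := by
    refine tendsto_lintegral_filter_of_dominated_convergence' _
      (.of_forall fun i ↦ (hf.1.enorm.pow_const _).indicator (hφ.measurableSet i).compl)
      (.of_forall fun i ↦ .of_forall (Set.indicator_le_self _ _)) hfin ?_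
    filter_upwards [hφ.ae_eventually_mem] with x hx
    refine tendsto_const_nhds.congr' ?_
    filter_upwards [hx] with i hi
    rw [Set.indicator_of_notMem (Set.notMem_compl_iff.2 hi)]
  have hroot := ((ENNReal.continuous_rpow_const (y := 1 / p.toReal)).tendsto _).comp htail
  rw [lintegral_zero, ENNReal.zero_rpow_of_pos (one_div_pos.2 (ENNReal.toReal_pos hp0 hp))] at hroot
  refine hroot.congr fun i ↦ ?_
  rw [eLpNorm_indicator_eq_eLpNorm_restrict (hφ.measurableSet i).compl,
    eLpNorm_eq_lintegral_rpow_enorm_toReal hp0 hp,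
    ← lintegral_indicator (hφ.measurableSet i).compl, Function.comp_apply]

theorem eLpNorm_comp_smul [NormedAddCommGroup V] [NormedSpace ℝ V] [FiniteDimensional ℝ V]
    [MeasurableSpace V] [BorelSpace V] (μ : Measure V) [μ.IsAddHaarMeasure] (f : V → F)
    {p : ℝ≥0∞} (hp : p ≠ ∞) {c : ℝ} (hc : c ≠ 0) :
    eLpNorm (fun x ↦ f (c • x)) p μ =
      ENNReal.ofReal |(c ^ Module.finrank ℝ V)⁻¹| ^ (1 / p).toReal * eLpNorm f p μ := by
  rw [← smul_eq_mul, ← eLpNorm_smul_measure_of_ne_top hp, ← Measure.map_addHaar_smul μ hc]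
  exact ((Homeomorph.smulOfNeZero c hc).measurableEmbedding.eLpNorm_map_measure).symm

theorem lp_coeFn_ae_eq_of_toTemperedDistribution_eq [NormedSpace ℂ F] [CompleteSpace F]
    [NormedAddCommGroup V] [InnerProductSpace ℝ V] [FiniteDimensional ℝ V] [MeasurableSpace V]
    [BorelSpace V] {μ : Measure V} [IsLocallyFiniteMeasure μ] [μ.HasTemperateGrowth]
    {p : ℝ≥0∞} [Fact (1 ≤ p)] (u : Lp F p μ) {v : V → F}
    (hv : LocallyIntegrable v μ)
    (huv : ∀ φ : 𝓢(V, ℂ), Lp.toTemperedDistribution u φ = ∫ x, φ x • v x ∂μ) : u =ᵐ[μ] v := by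
  refine ae_eq_of_integral_contDiff_smul_eq ((Lp.memLp u).locallyIntegrable Fact.out) hv
    fun g g_smooth g_cpt ↦ ?_
  have hg_cpt : HasCompactSupport (Complex.ofRealCLM ∘ g) := g_cpt.comp_left rfl
  have hg_smooth : ContDiff ℝ ((⊤ : ℕ∞) : WithTop ℕ∞) (Complex.ofRealCLM ∘ g) := by fun_prop
  simpa using huv (hg_cpt.toSchwartzMap hg_smooth)

end LpTools

section FourierL2

variable {V F : Type*} [NormedAddCommGroup V] [InnerProductSpace ℝ V] [FiniteDimensional ℝ V]
  [MeasurableSpace V] [BorelSpace V]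

theorem integrable_indicator_closedBall_of_memLp [NormedAddCommGroup F]
    {f : V → F} {p : ℝ≥0∞} (hp : 1 ≤ p) (hf : MemLp f p) (R : ℝ) :
    Integrable ((closedBall 0 R).indicator f) :=
  (integrable_indicator_iff measurableSet_closedBall).2 <|
    (hf.locallyIntegrable hp).integrableOn_isCompact (isCompact_closedBall 0 R)

section NormedSpace

variable [NormedAddCommGroup F] [NormedSpace ℂ F] {f : V → F}

theorem continuous_fourier_of_integrable (hf : Integrable f) : Continuous (𝓕 f) :=
  Real.fourierTransform_toLp (memLp_one_iff_integrable.2 hf) ▸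
    (Real.Lp.fourierTransform (memLp_one_iff_integrable.2 hf).toLp).continuous

theorem continuous_fourierInv_of_integrable (hf : Integrable f) : Continuous (𝓕⁻ f) :=
  Real.Lp.fourierTransformInv_toLp (memLp_one_iff_integrable.2 hf) ▸
    (Real.Lp.fourierTransformInv (memLp_one_iff_integrable.2 hf).toLp).continuous

theorem fourierInv_const_smul (c : ℂ) (f : V → F) : 𝓕⁻ (c • f) = c • 𝓕⁻ f :=
  VectorFourier.fourierIntegral_const_smul _ _ _ _ _

theorem integral_fourier_smul_eq_of_integrable [CompleteSpace F] {φ : V → ℂ} (hφ : Integrable φ)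
    (hf : Integrable f) : ∫ ξ, 𝓕 φ ξ • f ξ = ∫ x, φ x • 𝓕 f x := by
  have hflip := VectorFourier.integral_fourierIntegral_smul_eq_flip (μ := volume) (ν := volume)
    (L := innerₗ V) Real.continuous_fourierChar (by exact continuous_inner) hφ hf
  rwa [flip_innerₗ] at hflip

theorem integral_fourierInv_smul_eq_of_integrable [CompleteSpace F] {φ : V → ℂ}
    (hφ : Integrable φ) (hf : Integrable f) : ∫ ξ, 𝓕⁻ φ ξ • f ξ = ∫ x, φ x • 𝓕⁻ f x := by
  rw [Real.fourierInv_eq_fourier_comp_neg,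
    integral_fourier_smul_eq_of_integrable hφ.comp_neg hf, ← integral_neg_eq_self]
  simp only [neg_neg, Real.fourierInv_eq_fourier_neg]

end NormedSpace

variable [NormedAddCommGroup F] [InnerProductSpace ℂ F] [CompleteSpace F] {f : V → F}

theorem coeFn_fourier_toLp (hf : Integrable f) (hf2 : MemLp f 2) :
    (𝓕 (hf2.toLp f) : Lp F 2 (volume : Measure V)) =ᵐ[volume] 𝓕 f := by
  refine lp_coeFn_ae_eq_of_toTemperedDistribution_eq _
    (continuous_fourier_of_integrable hf).locallyIntegrable fun φ ↦ ?_
  rw [← Lp.fourier_toTemperedDistribution_eq, TemperedDistribution.fourier_apply,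
    Lp.toTemperedDistribution_apply, ← integral_fourier_smul_eq_of_integrable φ.integrable hf,
    ← fourier_coe]
  refine integral_congr_ae ?_
  filter_upwards [hf2.coeFn_toLp] with x hx
  rw [hx]

theorem coeFn_fourierInv_toLp (hf : Integrable f) (hf2 : MemLp f 2) :
    (𝓕⁻ (hf2.toLp f) : Lp F 2 (volume : Measure V)) =ᵐ[volume] 𝓕⁻ f := by
  refine lp_coeFn_ae_eq_of_toTemperedDistribution_eq _
    (continuous_fourierInv_of_integrable hf).locallyIntegrable fun φ ↦ ?_
  rw [← Lp.fourierInv_toTemperedDistribution_eq, TemperedDistribution.fourierInv_apply,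
    Lp.toTemperedDistribution_apply, ← integral_fourierInv_smul_eq_of_integrable φ.integrable hf,
    ← fourierInv_coe]
  refine integral_congr_ae ?_
  filter_upwards [hf2.coeFn_toLp] with x hx
  rw [hx]

theorem memLp_two_fourierInv (hf : Integrable f) (hf2 : MemLp f 2) : MemLp (𝓕⁻ f) 2 :=
  (memLp_congr_ae (coeFn_fourierInv_toLp hf hf2)).1 (Lp.memLp _)

theorem fourier_toLp_fourierInv (hf : Integrable f) (hf2 : MemLp f 2) :
    𝓕 ((memLp_two_fourierInv hf hf2).toLp (𝓕⁻ f)) = hf2.toLp f := by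
  have hinv : (memLp_two_fourierInv hf hf2).toLp (𝓕⁻ f) = 𝓕⁻ (hf2.toLp f) :=
    Lp.ext ((MemLp.coeFn_toLp _).trans (coeFn_fourierInv_toLp hf hf2).symm)
  rw [hinv, FourierTransform.fourier_fourierInv_eq]

theorem enorm_fourier_lp (u : Lp F 2 (volume : Measure V)) : ‖𝓕 u‖ₑ = ‖u‖ₑ := by
  rw [← ofReal_norm, Lp.norm_fourier_eq, ofReal_norm]

theorem eLpNorm_two_fourierInv (hf : Integrable f) (hf2 : MemLp f 2) :
    eLpNorm (𝓕⁻ f) 2 = eLpNorm f 2 := by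
  rw [← Lp.enorm_toLp (memLp_two_fourierInv hf hf2), ← enorm_fourier_lp,
    fourier_toLp_fourierInv hf hf2, Lp.enorm_toLp]

theorem eLpNorm_fourier_toLp_sub_fourier {g : V → F} (hf2 : MemLp f 2) (hg : Integrable g)
    (hg2 : MemLp g 2) :
    eLpNorm (fun ξ ↦ (𝓕 (hf2.toLp f) : Lp F 2 (volume : Measure V)) ξ - 𝓕 g ξ) 2 =
      eLpNorm (f - g) 2 := by
  have hsub : 𝓕 (hf2.toLp f - hg2.toLp g) = 𝓕 (hf2.toLp f) - 𝓕 (hg2.toLp g) :=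
    map_sub (Lp.fourierTransformₗᵢ V F) _ _
  rw [← Lp.enorm_toLp (hf2.sub hg2), MemLp.toLp_sub hf2 hg2, ← enorm_fourier_lp, hsub, Lp.enorm_def]
  refine eLpNorm_congr_ae ?_
  filter_upwards [Lp.coeFn_sub (𝓕 (hf2.toLp f)) (𝓕 (hg2.toLp g)), coeFn_fourier_toLp hg hg2]
    with ξ hcoe hξ
  rw [hcoe, Pi.sub_apply, hξ]

theorem tendsto_eLpNorm_fourier_toLp_sub_fourier_indicator (hf2 : MemLp f 2) :
    Tendsto (fun R : ℝ ↦ eLpNorm (fun ξ ↦ (𝓕 (hf2.toLp f) : Lp F 2 (volume : Measure V)) ξ -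
      𝓕 ((closedBall 0 R).indicator f) ξ) 2) atTop (𝓝 0) := by
  have hcover : AECover (volume : Measure V) atTop (closedBall (0 : V)) :=
    aecover_closedBall tendsto_id
  refine (tendsto_eLpNorm_indicator_compl_of_aecover hcover ENNReal.ofNat_ne_top hf2).congr
    fun R ↦ ?_
  rw [eLpNorm_fourier_toLp_sub_fourier hf2
    (integrable_indicator_closedBall_of_memLp one_le_two hf2 R)
    (hf2.indicator measurableSet_closedBall), Set.indicator_compl]

end FourierL2

section Minkowski

variable {κ ι : Type*}

theorem ennreal_sq_tsum (a : ι → ℝ≥0∞) : (∑' j, a j) ^ 2 = ∑' j, ∑' k, a j * a k := by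
  rw [sq, ← ENNReal.tsum_mul_right]
  exact tsum_congr fun j ↦ ENNReal.tsum_mul_left.symm

theorem ennreal_tsum_mul_le {a b : ι → ℝ≥0∞} {A B : ℝ≥0∞} (ha : ∑' n, a n ^ 2 ≤ A ^ 2)
    (hb : ∑' n, b n ^ 2 ≤ B ^ 2) : ∑' n, a n * b n ≤ A * B := by
  let _ : MeasurableSpace ι := ⊤
  have hroot {S C : ℝ≥0∞} (h : S ≤ C ^ 2) : S ^ (1 / 2 : ℝ) ≤ C := by
    rwa [one_div, ENNReal.rpow_inv_le_iff two_pos, ENNReal.rpow_two]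
  have hholder := ENNReal.lintegral_mul_le_Lp_mul_Lq Measure.count .two_two
    (measurable_from_top (f := a)).aemeasurable (measurable_from_top (f := b)).aemeasurable
  simp only [lintegral_count, Pi.mul_apply, ENNReal.rpow_two] at hholder
  exact hholder.trans (mul_le_mul' (hroot ha) (hroot hb))

theorem ennreal_tsum_sq_tsum_le {a : κ → ι → ℝ≥0∞} {A : κ → ℝ≥0∞}
    (ha : ∀ j, ∑' n, a j n ^ 2 ≤ A j ^ 2) : ∑' n, (∑' j, a j n) ^ 2 ≤ (∑' j, A j) ^ 2 := by
  calc ∑' n, (∑' j, a j n) ^ 2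
      = ∑' n, ∑' j, ∑' k, a j n * a k n := by simp only [ennreal_sq_tsum]
    _ = ∑' j, ∑' k, ∑' n, a j n * a k n := by
        rw [ENNReal.tsum_comm]
        exact tsum_congr fun j ↦ ENNReal.tsum_comm
    _ ≤ ∑' j, ∑' k, A j * A k :=
        ENNReal.tsum_le_tsum fun j ↦ ENNReal.tsum_le_tsum fun k ↦
          ennreal_tsum_mul_le (ha j) (ha k)
    _ = (∑' j, A j) ^ 2 := (ennreal_sq_tsum A).symm

end Minkowski

section AngularNormalization

variable {d : ℕ}

/-- The rescaling `(2π)^{-d/2} F(ξ / 2π)`, which turns the Fourier transform with kernel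
`e^{-2πi⟨x,ξ⟩}` (the convention of `𝓕`) into the one with kernel `e^{-i⟨x,ξ⟩}` and prefactor
`(2π)^{-d/2}` (the convention of `truncFT`). -/
def angularRescale (d : ℕ) (F : EuclideanSpace ℝ (Fin d) → ℂ) (ξ : EuclideanSpace ℝ (Fin d)) : ℂ :=
  (((2 * Real.pi) ^ (-(d : ℝ) / 2) : ℝ) : ℂ) * F ((2 * Real.pi)⁻¹ • ξ)

theorem angularRescale_eq_zero_iff {F : EuclideanSpace ℝ (Fin d) → ℂ}
    {ξ : EuclideanSpace ℝ (Fin d)} : angularRescale d F ξ = 0 ↔ F ((2 * Real.pi)⁻¹ • ξ) = 0 := by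
  have hpos : (0 : ℝ) < (2 * Real.pi) ^ (-(d : ℝ) / 2) := by positivity
  simp only [angularRescale, mul_eq_zero, Complex.ofReal_eq_zero, hpos.ne', false_or]

theorem angularRescale_sub (F G : EuclideanSpace ℝ (Fin d) → ℂ) :
    angularRescale d (fun ξ ↦ F ξ - G ξ) = fun ξ ↦ angularRescale d F ξ - angularRescale d G ξ :=
  funext fun _ ↦ mul_sub _ _ _

theorem angularRescale_congr_ae {F G : EuclideanSpace ℝ (Fin d) → ℂ} (h : F =ᵐ[volume] G) :
    angularRescale d F =ᵐ[volume] angularRescale d G := by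
  filter_upwards [(Measure.quasiMeasurePreserving_smul volume
    (inv_ne_zero Real.two_pi_pos.ne')).ae_eq_comp h] with ξ hξ
  exact congrArg _ hξ

theorem eLpNorm_two_angularRescale (F : EuclideanSpace ℝ (Fin d) → ℂ) :
    eLpNorm (angularRescale d F) 2 = eLpNorm F 2 := by
  have hπ : 0 < 2 * Real.pi := Real.two_pi_pos
  have hexp : -(d : ℝ) / 2 + d * (1 / 2 : ℝ≥0∞).toReal = 0 := by simp; ring
  have hconst : ‖(((2 * Real.pi) ^ (-(d : ℝ) / 2) : ℝ) : ℂ)‖ₑ *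
      ENNReal.ofReal |((2 * Real.pi)⁻¹ ^ d)⁻¹| ^ (1 / 2 : ℝ≥0∞).toReal = 1 := by
    rw [← ofReal_norm, Complex.norm_real, Real.norm_of_nonneg (by positivity),
      abs_of_pos (by positivity), ENNReal.ofReal_rpow_of_pos (by positivity),
      ← ENNReal.ofReal_mul (by positivity), inv_pow, inv_inv, ← Real.rpow_natCast,
      ← Real.rpow_mul hπ.le, ← Real.rpow_add hπ, hexp, Real.rpow_zero, ENNReal.ofReal_one]
  have hsmul : angularRescale d F = (((2 * Real.pi) ^ (-(d : ℝ) / 2) : ℝ) : ℂ) •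
      fun ξ ↦ F ((2 * Real.pi)⁻¹ • ξ) := rfl
  rw [hsmul, eLpNorm_const_smul,
    eLpNorm_comp_smul volume F ENNReal.ofNat_ne_top (inv_ne_zero hπ.ne'),
    finrank_euclideanSpace_fin, ← mul_assoc, hconst, one_mul]

theorem memLp_two_angularRescale {F : EuclideanSpace ℝ (Fin d) → ℂ} (hF : MemLp F 2) :
    MemLp (angularRescale d F) 2 :=
  ⟨(hF.1.comp_quasiMeasurePreserving <| Measure.quasiMeasurePreserving_smul _ <|
      inv_ne_zero Real.two_pi_pos.ne').const_mul _,
    (eLpNorm_two_angularRescale F).trans_lt hF.2⟩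

theorem truncFT_eq_angularRescale (f : EuclideanSpace ℝ (Fin d) → ℂ) (R : ℝ) :
    truncFT d f R = angularRescale d (𝓕 ((closedBall 0 R).indicator f)) := by
  ext ξ
  rw [truncFT, angularRescale, Real.fourier_eq', ← integral_indicator measurableSet_closedBall]
  congr 2 with x
  have hphase : -2 * Real.pi * inner ℝ x ((2 * Real.pi)⁻¹ • ξ) = -inner ℝ x ξ := by
    rw [inner_smul_right]
    field_simp
  rw [hphase, Set.indicator_mul_right, smul_eq_mul, Complex.ofReal_neg, neg_mul, mul_comm Complex.I]

namespace IsL2Fourier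

variable {f fhat ghat : EuclideanSpace ℝ (Fin d) → ℂ}

theorem congr_ae (h : IsL2Fourier d f fhat) (hae : fhat =ᵐ[volume] ghat) :
    IsL2Fourier d f ghat := by
  refine ⟨(memLp_congr_ae hae).1 h.1, h.2.congr fun R ↦ eLpNorm_congr_ae ?_⟩
  filter_upwards [hae] with ξ hξ
  rw [hξ]

theorem ae_eq (hf : MemLp f 2) (hfhat : IsL2Fourier d f fhat) (hghat : IsL2Fourier d f ghat) :
    fhat =ᵐ[volume] ghat := by
  have hmeas (R : ℝ) : AEStronglyMeasurable (truncFT d f R) volume := by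
    have hcont := continuous_fourier_of_integrable
      (integrable_indicator_closedBall_of_memLp one_le_two hf R)
    rw [truncFT_eq_angularRescale]
    exact (continuous_const.mul (hcont.comp (continuous_const_smul _))).aestronglyMeasurable
  have hlim := hfhat.2.add hghat.2
  rw [add_zero] at hlim
  have hzero : eLpNorm (fhat - ghat) 2 = 0 := by
    refine le_antisymm (ge_of_tendsto' hlim fun R ↦ ?_) bot_le
    rw [← sub_sub_sub_cancel_right fhat ghat (truncFT d f R)]
    exact eLpNorm_sub_le (hfhat.1.1.sub (hmeas R)) (hghat.1.1.sub (hmeas R)) one_le_two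
  exact (sub_ae_eq_zero _ _).1
    ((eLpNorm_eq_zero_iff (hfhat.1.1.sub hghat.1.1) two_ne_zero).1 hzero)

end IsL2Fourier

theorem isL2Fourier_angularRescale {f : EuclideanSpace ℝ (Fin d) → ℂ} (hf : MemLp f 2) :
    IsL2Fourier d f (angularRescale d (𝓕 (hf.toLp f) : Lp ℂ 2)) := by
  refine ⟨memLp_two_angularRescale (Lp.memLp _),
    (tendsto_eLpNorm_fourier_toLp_sub_fourier_indicator hf).congr fun R ↦ ?_⟩
  rw [truncFT_eq_angularRescale, ← eLpNorm_two_angularRescale, angularRescale_sub]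

end AngularNormalization

section Bandlimited

variable {d : ℕ} {r : ℝ}

theorem isBounded_Qcube (d : ℕ) (r : ℝ) : Bornology.IsBounded (Qcube d r) := by
  have hbox := (PiLp.antilipschitzWith_ofLp 2 fun _ : Fin d ↦ ℝ).isBounded_preimage
    (isBounded_Icc (fun _ ↦ -r) fun _ ↦ r)
  exact hbox.subset fun ξ hξ ↦ ⟨fun j ↦ (abs_le.1 (hξ j)).1, fun j ↦ (abs_le.1 (hξ j)).2⟩

theorem smul_mem_Qcube_iff {c : ℝ} (hc : 0 < c) {ξ : EuclideanSpace ℝ (Fin d)} :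
    c • ξ ∈ Qcube d r ↔ ξ ∈ Qcube d (r / c) :=
  forall_congr' fun j ↦ by
    rw [PiLp.smul_apply, smul_eq_mul, abs_mul, abs_of_pos hc, le_div_iff₀' hc]

theorem integrable_of_support_subset_Qcube {G : EuclideanSpace ℝ (Fin d) → ℂ} (hG : MemLp G 2)
    (hsupp : Function.support G ⊆ Qcube d r) : Integrable G :=
  memLp_one_iff_integrable.1 <| hG.mono_exponent_of_measure_support_ne_top
    (fun _ hξ ↦ Function.notMem_support.1 fun h ↦ hξ (hsupp h))
    (isBounded_Qcube d r).measure_lt_top.ne one_le_two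

/-- The continuous, square integrable functions on `ℝ^d` whose spectrum lies in `Q_r(0)`: the
continuous representatives of the elements of the paper's space `𝒫_N`, where `r = πN`. -/
structure IsBandlimited (d : ℕ) (r : ℝ) (f : EuclideanSpace ℝ (Fin d) → ℂ) : Prop where
  continuous : Continuous f
  memLp : MemLp f 2
  exists_fourier : ∃ fhat, IsL2Fourier d f fhat ∧ ∀ᵐ ξ, ξ ∉ Qcube d r → fhat ξ = 0

theorem isBandlimited_fourierInv {G : EuclideanSpace ℝ (Fin d) → ℂ} (hG : MemLp G 2)
    (hsupp : Function.support G ⊆ Qcube d (r / (2 * Real.pi))) : IsBandlimited d r (𝓕⁻ G) := by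
  have hint := integrable_of_support_subset_Qcube hG hsupp
  refine ⟨continuous_fourierInv_of_integrable hint, memLp_two_fourierInv hint hG,
    angularRescale d G, (isL2Fourier_angularRescale (memLp_two_fourierInv hint hG)).congr_ae
      (angularRescale_congr_ae ?_), .of_forall fun ξ hξ ↦ ?_⟩
  · rw [fourier_toLp_fourierInv hint hG]
    exact hG.coeFn_toLp
  · rw [angularRescale_eq_zero_iff]
    refine Function.notMem_support.1 fun h ↦ hξ ?_
    rw [← smul_inv_smul₀ Real.two_pi_pos.ne' ξ]
    exact (smul_mem_Qcube_iff Real.two_pi_pos).2 (hsupp h)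

namespace IsBandlimited

variable {f : EuclideanSpace ℝ (Fin d) → ℂ}

theorem ae_fourier_toLp_eq_zero (hf : IsBandlimited d r f) :
    ∀ᵐ η, η ∉ Qcube d (r / (2 * Real.pi)) →
      (𝓕 (hf.memLp.toLp f) : Lp ℂ 2 (volume : Measure (EuclideanSpace ℝ (Fin d)))) η = 0 := by
  obtain ⟨fhat, hfhat, hzero⟩ := hf.exists_fourier
  have hae := hfhat.ae_eq hf.memLp (isL2Fourier_angularRescale hf.memLp)
  have hdil := Measure.quasiMeasurePreserving_smul
    (volume : Measure (EuclideanSpace ℝ (Fin d))) Real.two_pi_pos.ne'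
  filter_upwards [hdil.ae hzero, hdil.ae hae] with η hη hηeq hout
  have hangular := hηeq.symm.trans (hη ((smul_mem_Qcube_iff Real.two_pi_pos).not.2 hout))
  rwa [angularRescale_eq_zero_iff, inv_smul_smul₀ Real.two_pi_pos.ne'] at hangular

theorem exists_fourierInv_eq (hf : IsBandlimited d r f) :
    ∃ G : EuclideanSpace ℝ (Fin d) → ℂ,
      MemLp G 2 ∧ Function.support G ⊆ Qcube d (r / (2 * Real.pi)) ∧ 𝓕⁻ G = f := by
  let u : Lp ℂ 2 (volume : Measure (EuclideanSpace ℝ (Fin d))) := 𝓕 (hf.memLp.toLp f)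
  let G := (Qcube d (r / (2 * Real.pi))).indicator u
  have hGu : G =ᵐ[volume] u := by
    filter_upwards [hf.ae_fourier_toLp_eq_zero] with η hη
    exact Set.indicator_apply_eq_self.2 hη
  have hG : MemLp G 2 := (memLp_congr_ae hGu).2 (Lp.memLp u)
  have hsupp : Function.support G ⊆ Qcube d (r / (2 * Real.pi)) := Set.support_indicator_subset
  have hint := integrable_of_support_subset_Qcube hG hsupp
  have hinv : 𝓕⁻ (hG.toLp G) = hf.memLp.toLp f := by
    rw [(Lp.ext (hG.coeFn_toLp.trans hGu) : hG.toLp G = u),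
      FourierTransform.fourierInv_fourier_eq]
  have hae : 𝓕⁻ G =ᵐ[volume] f := by
    have hcoe := coeFn_fourierInv_toLp hint hG
    rw [hinv] at hcoe
    exact hcoe.symm.trans hf.memLp.coeFn_toLp
  exact ⟨G, hG, hsupp, (Continuous.ae_eq_iff_eq volume
    (continuous_fourierInv_of_integrable hint) hf.continuous).1 hae⟩

theorem const_smul (hf : IsBandlimited d r f) (c : ℂ) : IsBandlimited d r (c • f) := by
  obtain ⟨G, hG, hsupp, rfl⟩ := hf.exists_fourierInv_eq
  rw [← fourierInv_const_smul]
  exact isBandlimited_fourierInv (hG.const_smul c)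
    ((Function.support_const_smul_subset c G).trans hsupp)

theorem tsum_enorm_sq_le_of_forall {ι : Type*} {lam : ι → EuclideanSpace ℝ (Fin d)} {C : ℝ≥0∞}
    (hlam : ∀ h, IsBandlimited d r h → l2norm d h ≤ 1 → ∑' n, ‖h (lam n)‖ₑ ^ 2 ≤ C)
    (hf : IsBandlimited d r f) : ∑' n, ‖f (lam n)‖ₑ ^ 2 ≤ C * eLpNorm f 2 ^ 2 := by
  rcases eq_or_ne (eLpNorm f 2) 0 with hzero | hzero
  · have hf0 : f = 0 := (hf.continuous.ae_eq_iff_eq volume continuous_zero).1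
      ((eLpNorm_eq_zero_iff hf.memLp.1 two_ne_zero).1 hzero)
    simp [hf0]
  obtain ⟨c, hc⟩ : ∃ c : ℂ, ‖c‖ₑ = eLpNorm f 2 := by
    refine ⟨(eLpNorm f 2).toReal, ?_⟩
    rw [← ofReal_norm, Complex.norm_of_nonneg ENNReal.toReal_nonneg,
      ENNReal.ofReal_toReal hf.memLp.2.ne]
  have hc0 : c ≠ 0 := fun h ↦ hzero (by rw [← hc, h, enorm_zero])
  have hcancel : ‖c⁻¹‖ₑ * eLpNorm f 2 = 1 := by
    rw [enorm_inv hc0, hc, ENNReal.inv_mul_cancel hzero hf.memLp.2.ne]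
  have hunit : l2norm d (c⁻¹ • f) ≤ 1 := by
    rw [l2norm, eLpNorm_const_smul, hcancel, ENNReal.toReal_one]
  calc ∑' n, ‖f (lam n)‖ₑ ^ 2
      = (∑' n, ‖(c⁻¹ • f) (lam n)‖ₑ ^ 2) * eLpNorm f 2 volume ^ 2 := by
        rw [← ENNReal.tsum_mul_right]
        refine tsum_congr fun n ↦ ?_
        rw [← mul_pow, Pi.smul_apply, enorm_smul, mul_right_comm, hcancel, one_mul]
    _ ≤ C * eLpNorm f 2 volume ^ 2 := by
        gcongr
        exact hlam _ (hf.const_smul _) hunit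

end IsBandlimited

end Bandlimited

section FourierTaylor

variable {V F : Type*} [NormedAddCommGroup V] [InnerProductSpace ℝ V] [FiniteDimensional ℝ V]
  [MeasurableSpace V] [BorelSpace V] [NormedAddCommGroup F] [NormedSpace ℂ F]

theorem fourierInv_finsetSum {ι : Type*} {s : Finset ι} {g : ι → V → F}
    (hg : ∀ i ∈ s, Integrable (g i)) : 𝓕⁻ (∑ i ∈ s, g i) = ∑ i ∈ s, 𝓕⁻ (g i) := by
  classical
  induction s using Finset.induction_on with
  | empty =>
    ext x
    simp [Real.fourierInv_eq]
  | insert i s hi ih =>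
    have hgs (j) (hj : j ∈ s) : Integrable (g j) := hg j (Finset.mem_insert_of_mem hj)
    rw [Finset.sum_insert hi, Finset.sum_insert hi, ← ih hgs]
    exact VectorFourier.fourierIntegral_add Real.continuous_fourierChar
      (by exact continuous_inner.neg) (hg i (Finset.mem_insert_self i s))
      (integrable_finsetSum' s hgs)

theorem hasSum_fourierInv_add {G : V → F} (hG : Integrable G)
    (hbdd : Bornology.IsBounded (Function.support G)) (x t : V) :
    HasSum (fun k : ℕ ↦ 𝓕⁻ (fun η ↦
      ((((2 * Real.pi * inner ℝ η t : ℝ) : ℂ) * Complex.I) ^ k / k.factorial) • G η) x)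
      (𝓕⁻ G (x + t)) := by
  obtain ⟨M, hM⟩ := hbdd.exists_norm_le
  let e (y η : V) : ℂ := Complex.exp (((2 * Real.pi * inner ℝ η y : ℝ) : ℂ) * Complex.I)
  let z (η : V) : ℂ := ((2 * Real.pi * inner ℝ η t : ℝ) : ℂ) * Complex.I
  have hz {η : V} (hη : G η ≠ 0) : ‖z η‖ ≤ 2 * Real.pi * (M * ‖t‖) := by
    rw [norm_mul, Complex.norm_I, mul_one, Complex.norm_real, norm_mul,
      Real.norm_of_nonneg Real.two_pi_pos.le]
    gcongr
    exact (norm_inner_le_norm η t).trans (by gcongr; exact hM η hη)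
  have hsummable := Real.summable_pow_div_factorial (2 * Real.pi * (M * ‖t‖))
  have hsplit (η : V) : e (x + t) η = e x η * Complex.exp (z η) := by
    simp only [e, z, ← Complex.exp_add, inner_add_right]
    push_cast
    ring_nf
  simp only [Real.fourierInv_eq']
  refine hasSum_integral_of_dominated_convergence
    (fun k η ↦ (2 * Real.pi * (M * ‖t‖)) ^ k / k.factorial * ‖G η‖) (fun k ↦ ?_)
    (fun k ↦ .of_forall fun η ↦ ?_) (.of_forall fun η ↦ hsummable.mul_right _) ?_
    (.of_forall fun η ↦ ?_)
  · exact (by fun_prop : Continuous (e x)).aestronglyMeasurable.smul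
      ((by fun_prop : Continuous fun η ↦ z η ^ k / k.factorial).aestronglyMeasurable.smul hG.1)
  · rcases eq_or_ne (G η) 0 with hη | hη
    · simp [hη]
    · rw [norm_smul, Complex.norm_exp_ofReal_mul_I, one_mul, norm_smul, norm_div, norm_pow,
        Complex.norm_natCast]
      gcongr
      exact hz hη
  · simp only [_root_.tsum_mul_right]
    exact hG.norm.const_mul _
  · have hexp := NormedSpace.expSeries_div_hasSum_exp (z η)
    rw [← Complex.exp_eq_exp_ℂ] at hexp
    have hterm := (hexp.smul_const (G η)).const_smul (e x η)
    rwa [smul_smul, ← hsplit] at hterm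

end FourierTaylor

section PartialSymbol

variable {d k : ℕ}

/-- The Fourier symbol `∏ᵢ 2πi η_{w i}` of the iterated partial derivative
`∂_{w 0} ⋯ ∂_{w (k-1)}`, for the transform with kernel `e^{-2πi⟨x,η⟩}`. -/
def partialSymbol (w : Fin k → Fin d) (η : EuclideanSpace ℝ (Fin d)) : ℂ :=
  ∏ i, ((2 * Real.pi * η (w i) : ℝ) : ℂ) * Complex.I

theorem continuous_partialSymbol (w : Fin k → Fin d) : Continuous (partialSymbol w) := by
  unfold partialSymbol
  fun_prop

theorem inner_mul_I_pow_eq_sum_partialSymbol (k : ℕ) (η t : EuclideanSpace ℝ (Fin d)) :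
    (((2 * Real.pi * inner ℝ η t : ℝ) : ℂ) * Complex.I) ^ k =
      ∑ w : Fin k → Fin d, ((∏ i, t (w i) : ℝ) : ℂ) * partialSymbol w η := by
  have hlinear : ((2 * Real.pi * inner ℝ η t : ℝ) : ℂ) * Complex.I =
      ∑ j, (t j : ℂ) * (((2 * Real.pi * η j : ℝ) : ℂ) * Complex.I) := by
    simp only [PiLp.inner_apply, RCLike.inner_apply, conj_trivial]
    push_cast
    rw [Finset.mul_sum, Finset.sum_mul]
    exact Finset.sum_congr rfl fun j _ ↦ by ring
  rw [hlinear, Fintype.sum_pow]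
  simp only [Finset.prod_mul_distrib, partialSymbol, Complex.ofReal_prod]

theorem norm_partialSymbol_le {r : ℝ} (w : Fin k → Fin d) {η : EuclideanSpace ℝ (Fin d)}
    (hη : η ∈ Qcube d (r / (2 * Real.pi))) : ‖partialSymbol w η‖ ≤ r ^ k := by
  have hfactor (j : Fin d) : ‖((2 * Real.pi * η j : ℝ) : ℂ) * Complex.I‖ ≤ r := by
    rw [norm_mul, Complex.norm_I, mul_one, Complex.norm_real, norm_mul,
      Real.norm_of_nonneg Real.two_pi_pos.le, ← le_div_iff₀' Real.two_pi_pos]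
    exact hη j
  calc ‖partialSymbol w η‖ = ∏ i, ‖((2 * Real.pi * η (w i) : ℝ) : ℂ) * Complex.I‖ := norm_prod _ _
    _ ≤ ∏ _ : Fin k, r := Finset.prod_le_prod (fun _ _ ↦ norm_nonneg _) fun i _ ↦ hfactor (w i)
    _ = r ^ k := by rw [Finset.prod_const, Finset.card_univ, Fintype.card_fin]

variable {r : ℝ} {G : EuclideanSpace ℝ (Fin d) → ℂ}

theorem support_partialSymbol_mul_subset (w : Fin k → Fin d)
    (hsupp : Function.support G ⊆ Qcube d r) :
    Function.support (partialSymbol w * G) ⊆ Qcube d r :=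
  (Function.support_mul_subset_right _ _).trans hsupp

theorem norm_partialSymbol_mul_le (w : Fin k → Fin d)
    (hsupp : Function.support G ⊆ Qcube d (r / (2 * Real.pi))) (η : EuclideanSpace ℝ (Fin d)) :
    ‖(partialSymbol w * G) η‖ ≤ r ^ k * ‖G η‖ := by
  rw [Pi.mul_apply, norm_mul]
  rcases eq_or_ne (G η) 0 with hη | hη
  · simp [hη]
  · gcongr
    exact norm_partialSymbol_le w (hsupp hη)

theorem memLp_partialSymbol_mul {p : ℝ≥0∞} (w : Fin k → Fin d) (hG : MemLp G p)
    (hsupp : Function.support G ⊆ Qcube d (r / (2 * Real.pi))) :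
    MemLp (partialSymbol w * G) p :=
  hG.of_le_mul ((continuous_partialSymbol w).aestronglyMeasurable.mul hG.1)
    (.of_forall (norm_partialSymbol_mul_le w hsupp))

theorem eLpNorm_partialSymbol_mul_le (p : ℝ≥0∞) (w : Fin k → Fin d)
    (hsupp : Function.support G ⊆ Qcube d (r / (2 * Real.pi))) :
    eLpNorm (partialSymbol w * G) p ≤ ENNReal.ofReal (r ^ k) * eLpNorm G p :=
  eLpNorm_le_mul_eLpNorm_of_ae_le_mul (.of_forall (norm_partialSymbol_mul_le w hsupp)) p

theorem isBandlimited_fourierInv_partialSymbol_mul (w : Fin k → Fin d) (hG : MemLp G 2)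
    (hsupp : Function.support G ⊆ Qcube d (r / (2 * Real.pi))) :
    IsBandlimited d r (𝓕⁻ (partialSymbol w * G)) :=
  isBandlimited_fourierInv (memLp_partialSymbol_mul w hG hsupp)
    (support_partialSymbol_mul_subset w hsupp)

theorem eLpNorm_two_fourierInv_partialSymbol_mul_le (w : Fin k → Fin d) (hG : MemLp G 2)
    (hsupp : Function.support G ⊆ Qcube d (r / (2 * Real.pi))) :
    eLpNorm (𝓕⁻ (partialSymbol w * G)) 2 ≤ ENNReal.ofReal (r ^ k) * eLpNorm (𝓕⁻ G) 2 := by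
  have hmul := memLp_partialSymbol_mul w hG hsupp
  rw [eLpNorm_two_fourierInv (integrable_of_support_subset_Qcube hG hsupp) hG,
    eLpNorm_two_fourierInv (integrable_of_support_subset_Qcube hmul
      (support_partialSymbol_mul_subset w hsupp)) hmul]
  exact eLpNorm_partialSymbol_mul_le 2 w hsupp

theorem tsum_enorm_sq_fourierInv_partialSymbol_mul_le {ι : Type*} {B : ℝ} (hB : 0 ≤ B)
    {lam : ι → EuclideanSpace ℝ (Fin d)}
    (hlam : ∀ h, IsBandlimited d r h → l2norm d h ≤ 1 →
      ∑' n, ‖h (lam n)‖ₑ ^ 2 ≤ ENNReal.ofReal B) (w : Fin k → Fin d) (hG : MemLp G 2)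
    (hsupp : Function.support G ⊆ Qcube d (r / (2 * Real.pi))) :
    ∑' n, ‖𝓕⁻ (partialSymbol w * G) (lam n)‖ₑ ^ 2 ≤
      (ENNReal.ofReal √B * (ENNReal.ofReal (r ^ k) * eLpNorm (𝓕⁻ G) 2)) ^ 2 := by
  rw [mul_pow, ← ENNReal.ofReal_pow B.sqrt_nonneg, Real.sq_sqrt hB]
  refine ((isBandlimited_fourierInv_partialSymbol_mul w hG hsupp).tsum_enorm_sq_le_of_forall
    hlam).trans ?_
  gcongr
  exact eLpNorm_two_fourierInv_partialSymbol_mul_le w hG hsupp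

theorem fourierInv_inner_mul_I_pow_smul (k : ℕ) (t x : EuclideanSpace ℝ (Fin d))
    (hG : ∀ w : Fin k → Fin d, Integrable (partialSymbol w * G)) :
    𝓕⁻ (fun η ↦ ((((2 * Real.pi * inner ℝ η t : ℝ) : ℂ) * Complex.I) ^ k / k.factorial) • G η) x =
      ∑ w : Fin k → Fin d,
        (((∏ i, t (w i)) / k.factorial : ℝ) : ℂ) * 𝓕⁻ (partialSymbol w * G) x := by
  have hsum : (fun η ↦
      ((((2 * Real.pi * inner ℝ η t : ℝ) : ℂ) * Complex.I) ^ k / k.factorial) • G η) =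
      ∑ w : Fin k → Fin d,
        (((∏ i, t (w i)) / k.factorial : ℝ) : ℂ) • (partialSymbol w * G) := by
    ext η
    rw [inner_mul_I_pow_eq_sum_partialSymbol, Finset.sum_div, Finset.sum_smul, Finset.sum_apply]
    refine Finset.sum_congr rfl fun w _ ↦ ?_
    simp only [Pi.smul_apply, Pi.mul_apply, smul_eq_mul, Complex.ofReal_div, Complex.ofReal_natCast]
    ring
  rw [hsum, fourierInv_finsetSum fun w _ ↦ (hG w).smul _, Finset.sum_apply]
  simp only [fourierInv_const_smul, Pi.smul_apply, smul_eq_mul]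

theorem enorm_fourierInv_sub_le_tsum (hG : MemLp G 2)
    (hsupp : Function.support G ⊆ Qcube d (r / (2 * Real.pi))) {L : ℝ}
    {x y : EuclideanSpace ℝ (Fin d)} (hxy : ∀ j, |x j - y j| ≤ L) :
    ‖𝓕⁻ G x - 𝓕⁻ G y‖ₑ ≤ ∑' j : Σ k, (Fin (k + 1) → Fin d),
      ENNReal.ofReal (L ^ (j.1 + 1) / (j.1 + 1).factorial) * ‖𝓕⁻ (partialSymbol j.2 * G) x‖ₑ := by
  have hint := integrable_of_support_subset_Qcube hG hsupp
  have hint_mul {k : ℕ} (w : Fin k → Fin d) : Integrable (partialSymbol w * G) :=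
    integrable_of_support_subset_Qcube (memLp_partialSymbol_mul w hG hsupp)
      (support_partialSymbol_mul_subset w hsupp)
  have hcoeff {k : ℕ} (w : Fin k → Fin d) :
      ‖(((∏ i, (y - x) (w i)) / k.factorial : ℝ) : ℂ)‖ₑ ≤
        ENNReal.ofReal (L ^ k / k.factorial) := by
    rw [← ofReal_norm, Complex.norm_real, norm_div, norm_prod, Real.norm_natCast]
    gcongr
    exact (Finset.prod_le_prod (fun _ _ ↦ norm_nonneg _) fun i _ ↦
      (abs_sub_comm (y (w i)) _).trans_le (hxy (w i))).trans_eq (by simp)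
  have htail := (hasSum_nat_add_iff' 1).2
    (hasSum_fourierInv_add hint ((isBounded_Qcube d _).subset hsupp) x (y - x))
  simp only [Finset.sum_range_one, pow_zero, Nat.factorial_zero, Nat.cast_one, div_one, one_smul,
    add_sub_cancel] at htail
  rw [enorm_sub_rev, ← htail.tsum_eq, ENNReal.tsum_sigma']
  refine enorm_tsum_le_tsum_enorm.trans (ENNReal.tsum_le_tsum fun k ↦ ?_)
  rw [fourierInv_inner_mul_I_pow_smul _ _ _ hint_mul, tsum_fintype]
  refine (enorm_sum_le _ _).trans (Finset.sum_le_sum fun w _ ↦ ?_)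
  rw [enorm_mul]
  gcongr
  exact hcoeff w

theorem tsum_sigma_ofReal_pow_div_factorial (d : ℕ) {M : ℝ} (hM : 0 ≤ M) :
    ∑' j : Σ k, (Fin (k + 1) → Fin d), ENNReal.ofReal (M ^ (j.1 + 1) / (j.1 + 1).factorial) =
      ENNReal.ofReal (Real.exp (d * M) - 1) := by
  have hcard (k : ℕ) :
      ∑' _ : Fin (k + 1) → Fin d, ENNReal.ofReal (M ^ (k + 1) / (k + 1).factorial) =
        ENNReal.ofReal ((d * M) ^ (k + 1) / (k + 1).factorial) := by
    rw [tsum_fintype, Finset.sum_const, Finset.card_univ, Fintype.card_fun, Fintype.card_fin,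
      Fintype.card_fin, nsmul_eq_mul, ← ENNReal.ofReal_natCast,
      ← ENNReal.ofReal_mul (Nat.cast_nonneg _), Nat.cast_pow, ← mul_div_assoc, ← mul_pow]
  have hexp : HasSum (fun k : ℕ ↦ (d * M) ^ (k + 1) / (k + 1).factorial)
      (Real.exp (d * M) - 1) := by
    have hseries := NormedSpace.expSeries_div_hasSum_exp (d * M)
    rw [← Real.exp_eq_exp_ℝ] at hseries
    simpa using (hasSum_nat_add_iff' 1).2 hseries
  rw [ENNReal.tsum_sigma']
  simp only [hcard]
  rw [← ENNReal.ofReal_tsum_of_nonneg (fun k ↦ by positivity) hexp.summable, hexp.tsum_eq]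

end PartialSymbol

theorem statement10_general {ι : Type*} {d : ℕ} {r B L : ℝ} (hr : 0 ≤ r) (hB : 0 ≤ B) (hL : 0 ≤ L)
    {lam mu : ι → EuclideanSpace ℝ (Fin d)}
    (hlam : ∀ h, IsBandlimited d r h → l2norm d h ≤ 1 →
      ∑' n, ‖h (lam n)‖ₑ ^ 2 ≤ ENNReal.ofReal B)
    (hmu : ∀ n j, |lam n j - mu n j| ≤ L) {f : EuclideanSpace ℝ (Fin d) → ℂ}
    (hf : IsBandlimited d r f) :
    ∑' n, ‖f (lam n) - f (mu n)‖ₑ ^ 2 ≤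
      ENNReal.ofReal (B * (Real.exp (r * d * L) - 1) ^ 2 * l2norm d f ^ 2) := by
  obtain ⟨G, hG, hsupp, rfl⟩ := hf.exists_fourierInv_eq
  let c (k : ℕ) : ℝ≥0∞ := ENNReal.ofReal (L ^ k / k.factorial)
  let A (k : ℕ) : ℝ≥0∞ :=
    ENNReal.ofReal √B * (ENNReal.ofReal (r ^ k) * eLpNorm (𝓕⁻ G) 2)
  have hderiv (j : Σ k, (Fin (k + 1) → Fin d)) :
      ∑' n, (c (j.1 + 1) * ‖𝓕⁻ (partialSymbol j.2 * G) (lam n)‖ₑ) ^ 2 ≤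
        (c (j.1 + 1) * A (j.1 + 1)) ^ 2 := by
    simp only [mul_pow (c _), ENNReal.tsum_mul_left]
    gcongr
    exact tsum_enorm_sq_fourierInv_partialSymbol_mul_le hB hlam j.2 hG hsupp
  have hcoeff (k : ℕ) : c k * A k =
      ENNReal.ofReal ((r * L) ^ k / k.factorial) *
        (ENNReal.ofReal √B * eLpNorm (𝓕⁻ G) 2) := by
    rw [mul_pow, mul_div_assoc, ENNReal.ofReal_mul (pow_nonneg hr k)]
    ring
  have hexp : 0 ≤ Real.exp (r * d * L) - 1 := sub_nonneg.2 (Real.one_le_exp (by positivity))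
  calc ∑' n, ‖𝓕⁻ G (lam n) - 𝓕⁻ G (mu n)‖ₑ ^ 2
      ≤ ∑' n, (∑' j : Σ k, (Fin (k + 1) → Fin d),
          c (j.1 + 1) * ‖𝓕⁻ (partialSymbol j.2 * G) (lam n)‖ₑ) ^ 2 := by
        gcongr with n
        exact enorm_fourierInv_sub_le_tsum hG hsupp (hmu n)
    _ ≤ (∑' j : Σ k, (Fin (k + 1) → Fin d), c (j.1 + 1) * A (j.1 + 1)) ^ 2 :=
        ennreal_tsum_sq_tsum_le hderiv
    _ = (ENNReal.ofReal (Real.exp (r * d * L) - 1) *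
          (ENNReal.ofReal √B * eLpNorm (𝓕⁻ G) 2 volume)) ^ 2 := by
        simp only [hcoeff]
        rw [ENNReal.tsum_mul_right, tsum_sigma_ofReal_pow_div_factorial d (mul_nonneg hr hL),
          mul_left_comm (d : ℝ), ← mul_assoc r]
    _ = ENNReal.ofReal (B * (Real.exp (r * d * L) - 1) ^ 2 * l2norm d (𝓕⁻ G) ^ 2) := by
        rw [← ENNReal.ofReal_toReal hf.memLp.2.ne, ← ENNReal.ofReal_mul B.sqrt_nonneg,
          ← ENNReal.ofReal_mul hexp, ← ENNReal.ofReal_pow (by positivity), mul_pow, mul_pow,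
          Real.sq_sqrt hB, l2norm, ← mul_assoc, mul_comm (_ ^ 2) B]

/-- Stability of sampling for `𝒫₁`: let `B, L > 0`, let `(λ_n)` satisfy
`Σ_n |h(λ_n)|² ≤ B` for every `h ∈ 𝒫₁` with `‖h‖ ≤ 1`, and let `(μ_n)` satisfy
`|λ_n - μ_n| ≤ L`. Then every `f ∈ 𝒫₁` satisfies
`Σ_n |f(λ_n) - f(μ_n)|² ≤ B (e^{πdL} - 1)² ‖f‖²`. Membership in `𝒫₁` is expressed via a
continuous representative together with an `L²` Fourier transform supported in `Q_π(0)`. -/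
theorem statement10 (d : ℕ) (hd : 0 < d) (B L : ℝ) (hB : 0 < B) (hL : 0 < L)
    (lam mu : (Fin d → ℤ) → EuclideanSpace ℝ (Fin d))
    (hlam : ∀ h hhat : EuclideanSpace ℝ (Fin d) → ℂ,
      Continuous h → MemLp h 2 volume → IsL2Fourier d h hhat →
      (∀ᵐ ξ ∂(volume : Measure (EuclideanSpace ℝ (Fin d))),
        ξ ∉ Qcube d Real.pi → hhat ξ = 0) →
      l2norm d h ≤ 1 →
      ∑' n : Fin d → ℤ, (‖h (lam n)‖₊ : ℝ≥0∞) ^ 2 ≤ ENNReal.ofReal B)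
    (hmu : ∀ n, ‖lam n - mu n‖ ≤ L)
    (f fhat : EuclideanSpace ℝ (Fin d) → ℂ)
    (hf : Continuous f) (hfm : MemLp f 2 volume) (hFT : IsL2Fourier d f fhat)
    (hsupp : ∀ᵐ ξ ∂(volume : Measure (EuclideanSpace ℝ (Fin d))),
      ξ ∉ Qcube d Real.pi → fhat ξ = 0) :
    ∑' n : Fin d → ℤ, (‖f (lam n) - f (mu n)‖₊ : ℝ≥0∞) ^ 2
      ≤ ENNReal.ofReal
          (B * (Real.exp (Real.pi * d * L) - 1) ^ 2 * l2norm d f ^ 2) :=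
  statement10_general Real.pi_pos.le hB.le hL.le
    (fun h ⟨hc, hm, hhat, hF, hs⟩ ↦ hlam h hhat hc hm hF hs)
    (fun n j ↦ (PiLp.norm_apply_le (lam n - mu n) j).trans (hmu n)) ⟨hf, hfm, fhat, hFT, hsupp⟩
end
end
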